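/- arXiv:2301.02039 — 3 statements merged into one kernel-verified Lean document; each statement's English description precedes it below -/
import Mathlib

section
/- Let n, k, ρ be natural numbers with ρ > 1, k > 0 and k + ρ ≤ n. Then, in the real numbers, C(n−ρ, k) / C(n, k) < (1 − k/n)^ρ, where C denotes the binomial coefficient. Equivalently, 1 − (1 − k/n)^ρ < 1 − C(n−ρ,k)/C(n,k), i.e. Δ < Δ^L: our node-ablation bounding constant is strictly smaller than the bounding constant of Levine & Feizi's randomized ablation applied with the same expected number k of retained nodes (paper's Proposition on tighter guarantees, Appendix B). -/
lemma abl_step (n k r : ℕ) (h : k + (r + 1) ≤ n) :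
    ((n - (r+1)).choose k : ℝ) / (n.choose k : ℝ)
      = ((n - r).choose k : ℝ) / (n.choose k : ℝ) * (1 - (k : ℝ) / ((n : ℝ) - r)) := by
  obtain ⟨m, rfl⟩ : ∃ m, n = m + (r + 1) := ⟨n - (r+1), by omega⟩
  have e1 : m + (r + 1) - (r + 1) = m := by omega
  have e2 : m + (r + 1) - r = m + 1 := by omega
  rw [e1, e2]
  have key := Nat.choose_mul_succ_eq m k
  have key' : (m.choose k : ℝ) * (m + 1) = ((m+1).choose k : ℝ) * ((m : ℝ) + 1 - k) := by
    have := congrArg (Nat.cast : ℕ → ℝ) key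
    rw [Nat.cast_mul, Nat.cast_mul, Nat.cast_sub (by omega)] at this
    push_cast at this
    exact this
  have hm : (m : ℝ) + 1 ≠ 0 := by positivity
  have e3 : ((m + (r + 1) : ℕ) : ℝ) - r = m + 1 := by push_cast; ring
  have e4 : (m.choose k : ℝ) = ((m+1).choose k : ℝ) * (1 - (k : ℝ) / ((m : ℝ) + 1)) := by
    field_simp
    linarith
  rw [e3, e4]
  ring

lemma abl_le (n k r : ℕ) (h : k + r ≤ n) :
    ((n - r).choose k : ℝ) / (n.choose k : ℝ) ≤ (1 - (k : ℝ) / (n : ℝ)) ^ r := by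
  induction r with
  | zero => simpa using div_self_le_one _
  | succ r ih =>
    rw [abl_step n k r h, pow_succ]
    have hc : (k : ℝ) + (r + 1) ≤ n := by exact_mod_cast h
    have hr : (0 : ℝ) ≤ r := by positivity
    have hk : (0 : ℝ) ≤ k := by positivity
    have h0 : 0 ≤ 1 - (k : ℝ) / ((n : ℝ) - r) := by
      rw [sub_nonneg, div_le_one (by linarith)]; linarith
    have h1 : (k : ℝ) / n ≤ (k : ℝ) / ((n : ℝ) - r) :=
      div_le_div_of_nonneg_left hk (by linarith) (by linarith)
    have i := ih (by omega)
    exact mul_le_mul i (by linarith) h0 (le_trans (by positivity) i)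

/-- Paper's Proposition (tighter guarantees, Appendix B): for `ρ > 1`, `k > 0` and
`k + ρ ≤ n`, the hypergeometric ratio `C(n−ρ,k)/C(n,k)` is strictly smaller than
`(1 − k/n)^ρ`; hence `Δ = 1 − (1 − k/n)^ρ < Δ^L = 1 − C(n−ρ,k)/C(n,k)`. -/
theorem ablation_bound_tighter (n k ρ : ℕ) (hρ : 1 < ρ) (hk : 0 < k)
    (h : k + ρ ≤ n) :
    ((n - ρ).choose k : ℝ) / (n.choose k : ℝ) < (1 - (k : ℝ) / (n : ℝ)) ^ ρ := by
  obtain ⟨r, rfl⟩ : ∃ r, ρ = r + 1 := ⟨ρ - 1, by omega⟩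
  rw [abl_step n k r h, pow_succ]
  have hc : (k : ℝ) + (r + 1) ≤ n := by exact_mod_cast h
  have hr : (0 : ℝ) < r := by exact_mod_cast (by omega : 0 < r)
  have hk' : (0 : ℝ) < k := by exact_mod_cast hk
  have h0 : 0 ≤ 1 - (k : ℝ) / ((n : ℝ) - r) := by
    rw [sub_nonneg, div_le_one (by linarith)]; linarith
  have h1 : (k : ℝ) / n < (k : ℝ) / ((n : ℝ) - r) :=
    div_lt_div_of_pos_left hk' (by linarith) (by linarith)
  have hq : 0 < 1 - (k : ℝ) / n := by linarith
  calc _ ≤ (1 - (k : ℝ) / n) ^ r * (1 - (k : ℝ) / ((n : ℝ) - r)) :=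
        mul_le_mul_of_nonneg_right (abl_le n k r (by omega)) h0
    _ < _ := mul_lt_mul_of_pos_left (by linarith) (pow_pos hq r)
end

section
/- Let G be a simple graph on a vertex type V and let w, v ∈ V. If p and p' are two walks from w to v that are both paths (no repeated vertices), each of length at most 2, and p ≠ p', then p and p' share no edge, i.e. their edge sets are disjoint. (Key graph-theoretic fact behind the paper's Proposition that the single-source multiplicative bound is tight for GNNs with at most 2 layers: all simple paths of length at most 2 between a fixed source and target are pairwise edge-disjoint, hence the corresponding path events are independent.) -/
/-- Key fact behind the tightness of the single-source multiplicative bound for GNNs with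
at most 2 layers: in a simple graph, two distinct paths of length at most 2 between the same
pair of vertices share no edge. -/
theorem paths_length_le_two_edge_disjoint {V : Type*} (G : SimpleGraph V) (w v : V)
    (p p' : G.Walk w v) (hp : p.IsPath) (hp' : p'.IsPath)
    (hlen : p.length ≤ 2) (hlen' : p'.length ≤ 2) (hne : p ≠ p') :
    ∀ e, e ∈ p.edges → e ∉ p'.edges := by
  intro e he he'
  rcases p with _ | ⟨h1, _ | ⟨h2, _ | ⟨h3, q⟩⟩⟩
  · simp at he
  · rcases p' with _ | ⟨k1, _ | ⟨k2, _ | ⟨k3, q'⟩⟩⟩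
    · simp at he'
    · exact hne rfl
    · simp at he he' hp hp'
      grind
    · simp at hlen'
  · rcases p' with _ | ⟨k1, _ | ⟨k2, _ | ⟨k3, q'⟩⟩⟩
    · simp at he'
    · simp at he he' hp hp'
      grind
    · simp at he he' hp hp'
      grind
    · simp at hlen'
  · simp at hlen
end

section
/- Let G be a simple graph on a finite vertex type V with decidable equality, v₀ ∈ V a target node, and k a natural number. For a finite set K ⊆ V with v₀ ∈ K, let S(K) = {u ∈ K | u is reachable from v₀ in the subgraph of G induced on K}. Let S ⊆ V be a finite set with v₀ ∈ S and |S| ≤ k + 1 such that every u ∈ S is reachable from v₀ in the subgraph of G induced on S, and let N_S = {w ∈ V \ S | ∃ u ∈ S, G.Adj w u} be the neighbourhood of S. Then the number of finite sets K ⊆ V with |K| = k + 1, v₀ ∈ K and S(K) = S equals the binomial coefficient C(|V| − |N_S| − |S|, k + 1 − |S|). (Paper's Lemma on the correctness of Algorithm 1: β_S = C(|V_v| − |N_S| − |S|, k+1−|S|) is the size of the equivalence class of retention sets whose reduced representative is S; in particular a representative exists iff β_S > 0.) -/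
open Classical in
/-- The reduced representative `S(K)` of a retention set `K`: the set of retained nodes
that are still reachable from the target node `v₀` in the subgraph of `G` induced on `K`. -/
noncomputable def reducedRep {V : Type*} [Fintype V] [DecidableEq V]
    (G : SimpleGraph V) (v₀ : V) (K : Finset V) : Finset V :=
  K.filter fun u => ∃ (hv : v₀ ∈ K) (hu : u ∈ K),
    (G.induce (K : Set V)).Reachable ⟨v₀, Finset.mem_coe.mpr hv⟩ ⟨u, Finset.mem_coe.mpr hu⟩

open Classical in
theorem reducedRep_eq_iff_aux {V : Type*} [Fintype V] [DecidableEq V]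
    (G : SimpleGraph V) (v₀ : V) (S : Finset V)
    (hv₀ : v₀ ∈ S)
    (hconn : ∀ u (hu : u ∈ S),
      (G.induce (S : Set V)).Reachable ⟨v₀, Finset.mem_coe.mpr hv₀⟩
        ⟨u, Finset.mem_coe.mpr hu⟩) (K : Finset V) :
    (v₀ ∈ K ∧ reducedRep G v₀ K = S) ↔
      (S ⊆ K ∧ ∀ w ∈ K, w ∉ S → ∀ u ∈ S, ¬ G.Adj w u) := by
  constructor
  · rintro ⟨hK, rfl⟩
    refine ⟨fun x hx => (Finset.mem_filter.mp hx).1, ?_⟩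
    intro w hw hwS u hu hadj
    apply hwS
    obtain ⟨huK, hv, _, hr⟩ := Finset.mem_filter.mp hu
    refine Finset.mem_filter.mpr ⟨hw, hv, hw, hr.trans ?_⟩
    apply SimpleGraph.Adj.reachable
    exact hadj.symm
  · rintro ⟨hSK, hN⟩
    refine ⟨hSK hv₀, ?_⟩
    ext u
    constructor
    · intro hu
      obtain ⟨huK, hv, _, ⟨p⟩⟩ := Finset.mem_filter.mp hu
      have key : ∀ (a b : ((K : Finset V) : Set V)) (_ : (G.induce (K : Set V)).Walk a b),
          (a : V) ∈ S → (b : V) ∈ S := by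
        intro a b p
        induction p with
        | nil => exact id
        | cons hadj _ ih =>
          intro ha
          apply ih
          by_contra hb
          exact hN _ (Finset.mem_coe.mp (Subtype.property _)) hb _ ha (SimpleGraph.Adj.symm hadj)
      exact key _ _ p hv₀
    · intro hu
      refine Finset.mem_filter.mpr ⟨hSK hu, hSK hv₀, hSK hu, ?_⟩
      exact (hconn u hu).map (SimpleGraph.induceHomOfLE G (Finset.coe_subset.mpr hSK)).toHom

open Classical in
/-- Paper's Lemma on the correctness of Algorithm 1: the number of retention sets `K` of
`k + 1` nodes containing `v₀` whose reduced representative is `S` equals the binomial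
coefficient `C(|V| − |N_S| − |S|, k + 1 − |S|)`, where `N_S` is the neighbourhood of `S`. -/
theorem reducedRep_class_card {V : Type*} [Fintype V] [DecidableEq V]
    (G : SimpleGraph V) (v₀ : V) (k : ℕ) (S : Finset V)
    (hv₀ : v₀ ∈ S) (hcard : S.card ≤ k + 1)
    (hconn : ∀ u (hu : u ∈ S),
      (G.induce (S : Set V)).Reachable ⟨v₀, Finset.mem_coe.mpr hv₀⟩
        ⟨u, Finset.mem_coe.mpr hu⟩) :
    (Finset.univ.filter fun K : Finset V =>
        K.card = k + 1 ∧ v₀ ∈ K ∧ reducedRep G v₀ K = S).card =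
      (Fintype.card V -
          (Finset.univ.filter fun w => w ∉ S ∧ ∃ u ∈ S, G.Adj w u).card -
          S.card).choose (k + 1 - S.card) := by
  set N := Finset.univ.filter fun w => w ∉ S ∧ ∃ u ∈ S, G.Adj w u with hNdef
  have hdisj : Disjoint N S := by
    rw [Finset.disjoint_left]
    intro x hx
    exact (Finset.mem_filter.mp hx).2.1
  have hA : ((N ∪ S)ᶜ).card = Fintype.card V - N.card - S.card := by
    rw [Finset.card_compl, Finset.card_union_of_disjoint hdisj, Nat.sub_sub]
  rw [← hA, ← Finset.card_powersetCard]
  have hiff := reducedRep_eq_iff_aux G v₀ S hv₀ hconn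
  refine Finset.card_bij' (fun K _ => K \ S) (fun T _ => S ∪ T) ?_ ?_ ?_ ?_
  · intro K hK
    obtain ⟨hc, h⟩ := (Finset.mem_filter.mp hK).2
    obtain ⟨hSK, hN⟩ := (hiff K).mp h
    refine Finset.mem_powersetCard.mpr ⟨?_, ?_⟩
    · intro x hx
      obtain ⟨hxK, hxS⟩ := Finset.mem_sdiff.mp hx
      rw [Finset.mem_compl, Finset.mem_union, not_or]
      refine ⟨fun hxN => ?_, hxS⟩
      obtain ⟨_, _, u, hu, hadj⟩ := Finset.mem_filter.mp hxN
      exact hN x hxK hxS u hu hadj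
    · rw [Finset.card_sdiff_of_subset hSK, hc]
  · intro T hT
    obtain ⟨hTs, hTc⟩ := Finset.mem_powersetCard.mp hT
    have hT' : ∀ x ∈ T, x ∉ N ∧ x ∉ S := by
      intro x hx
      have := hTs hx
      rwa [Finset.mem_compl, Finset.mem_union, not_or] at this
    have hST : Disjoint S T := Finset.disjoint_right.mpr fun x hx => (hT' x hx).2
    refine Finset.mem_filter.mpr ⟨Finset.mem_univ _, ?_, (hiff _).mpr ⟨Finset.subset_union_left, ?_⟩⟩
    · rw [Finset.card_union_of_disjoint hST, hTc]
      omega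
    · intro w hw hwS u hu hadj
      have hwT : w ∈ T := (Finset.mem_union.mp hw).resolve_left hwS
      exact (hT' w hwT).1 (Finset.mem_filter.mpr ⟨Finset.mem_univ _, hwS, u, hu, hadj⟩)
  · intro K hK
    obtain ⟨hSK, _⟩ := (hiff K).mp (Finset.mem_filter.mp hK).2.2
    exact Finset.union_sdiff_of_subset hSK
  · intro T hT
    obtain ⟨hTs, _⟩ := Finset.mem_powersetCard.mp hT
    ext x
    have : x ∈ T → x ∉ S := fun hx hxS =>
      Finset.mem_compl.mp (hTs hx) (Finset.mem_union_right _ hxS)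
    simp only [Finset.mem_sdiff, Finset.mem_union]
    tauto
end
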